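/- Define ψ : ℝ → ℝ by ψ(ξ) = 2·∫₀^{1/e} (1 − cos(ξx))·log(1/x)·x^{−1} dx, and let μ be the measure on ℝ with density dμ/dξ = (1 + |ξ|)^{−1} with respect to Lebesgue measure. Then: (i) ∫_ℝ (1 + ψ(ξ))^{−1} μ(dξ) < ∞ (Dalang's condition holds); (ii) for every a ∈ (0, 1/2): ∫_ℝ ψ(ξ)^{a}·(1 + ψ(ξ))^{−1} μ(dξ) < ∞; and (iii) for every b > 0: ∫_ℝ |ξ|^{2b}·(1 + ψ(ξ))^{−1} μ(dξ) = ∞. In particular there exists a ∈ (0,1) for which ∫_ℝ ψ^{a}·(1+ψ)^{−1} dμ < ∞ while ∫_ℝ |ξ|^{2b}·(1+ψ)^{−1} dμ = ∞ for every b ∈ (0,1), so that the temporal regularity index ind_H is strictly positive while the spatial regularity index ind_L equals zero. -/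

import Mathlib

open MeasureTheory Set

/-- The characteristic exponent of the symmetric Lévy process with Lévy measure
`ν(dx) = |x|⁻¹ log(1/|x|) 1_{0<|x|<1/e} dx`. -/
noncomputable def psiEx (ξ : ℝ) : ℝ :=
  2 * ∫ x in Ioo (0 : ℝ) (Real.exp 1)⁻¹, (1 - Real.cos (ξ * x)) * Real.log (1 / x) / x

/-- The spectral measure with density `(1+|ξ|)⁻¹` with respect to Lebesgue measure. -/
noncomputable def muEx : Measure ℝ :=
  volume.withDensity fun ξ => ENNReal.ofReal (1 / (1 + |ξ|))

/-!
With `φ x = log (1 / x) / x` one has `ψ ξ = 2 ∫_{(0, 1/e)} (1 - cos (ξ x)) φ x dx`.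

* Lower bound: `φ` is decreasing, so averaging the integrand with its translate by half a period
  `π / ξ` of the cosine removes the oscillation and leaves
  `ψ ξ ≥ 2 ∫_{π/ξ}^{1/e} φ = log (ξ / π) ^ 2 - 1`. Hence `(1 + ψ) ^ (a - 1) / (1 + |ξ|)` is
  dominated by the Bertrand function `log ξ ^ (-2 (1 - a)) / ξ`, integrable when `a < 1 / 2`.
* Upper bound: `1 - cos y ≤ 2 |y| ^ q` and `∫ x ^ q φ x dx < ∞` for `0 < q ≤ 2`, so `ψ` grows
  slower than every power and `|ξ| ^ (2 b) / (1 + ψ) / (1 + |ξ|)` dominates a multiple of `ξ⁻¹`.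
-/

open Filter Asymptotics

section OneSubCos

theorem one_sub_cos_le_two_mul_abs_rpow {q : ℝ} (hq0 : 0 ≤ q) (hq2 : q ≤ 2) (y : ℝ) :
    1 - Real.cos y ≤ 2 * |y| ^ q := by
  rcases le_total |y| 1 with hy | hy
  · have hsq : y ^ 2 ≤ |y| ^ q := by
      simpa using Real.rpow_le_rpow_of_exponent_ge' (abs_nonneg y) hy hq0 hq2
    linarith [Real.one_sub_sq_div_two_le_cos (x := y), sq_nonneg y]
  · linarith [Real.one_le_rpow hy hq0, Real.neg_one_le_cos y]

theorem norm_one_sub_cos_mul_le {q : ℝ} (hq0 : 0 ≤ q) (hq2 : q ≤ 2) (ξ x : ℝ) :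
    ‖1 - Real.cos (ξ * x)‖ ≤ 2 * |ξ| ^ q * |x| ^ q := by
  rw [Real.norm_of_nonneg (sub_nonneg.2 (Real.cos_le_one _)), mul_assoc,
    ← Real.mul_rpow (abs_nonneg ξ) (abs_nonneg x), ← abs_mul]
  exact one_sub_cos_le_two_mul_abs_rpow hq0 hq2 (ξ * x)

variable {ν : Measure ℝ} {g : ℝ → ℝ} {q : ℝ}

theorem integrable_one_sub_cos_mul (hq0 : 0 ≤ q) (hq2 : q ≤ 2)
    (hg : Integrable (fun x => |x| ^ q * g x) ν) (ξ : ℝ) :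
    Integrable (fun x => (1 - Real.cos (ξ * x)) * g x) ν := by
  have hbound : ∀ x : ℝ, ‖(1 - Real.cos (ξ * x)) / |x| ^ q‖ ≤ 2 * |ξ| ^ q := fun x => by
    rw [norm_div, Real.norm_of_nonneg (by positivity : 0 ≤ |x| ^ q)]
    exact div_le_of_le_mul₀ (by positivity) (by positivity) (norm_one_sub_cos_mul_le hq0 hq2 ξ x)
  have hmeas : Measurable fun x : ℝ => (1 - Real.cos (ξ * x)) / |x| ^ q := by fun_prop
  refine (hg.bdd_mul hmeas.aestronglyMeasurable (.of_forall hbound)).congr (.of_forall fun x => ?_)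
  rcases eq_or_ne x 0 with rfl | hx
  · simp
  · have : |x| ^ q ≠ 0 := (Real.rpow_pos_of_pos (abs_pos.2 hx) q).ne'
    field_simp

theorem norm_integral_one_sub_cos_mul_le (hq0 : 0 ≤ q) (hq2 : q ≤ 2)
    (hg : Integrable (fun x => |x| ^ q * g x) ν) (ξ : ℝ) :
    ‖∫ x, (1 - Real.cos (ξ * x)) * g x ∂ν‖ ≤ 2 * |ξ| ^ q * ∫ x, ‖|x| ^ q * g x‖ ∂ν := by
  rw [← integral_const_mul]
  refine norm_integral_le_of_norm_le (hg.norm.const_mul _) (.of_forall fun x => ?_)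
  rw [norm_mul, norm_mul, Real.norm_of_nonneg (by positivity : 0 ≤ |x| ^ q), ← mul_assoc]
  gcongr
  exact norm_one_sub_cos_mul_le hq0 hq2 ξ x

variable {d ξ : ℝ}

theorem two_mul_le_one_sub_cos_mul_add_shift (hξ : 0 < ξ) (hg : AntitoneOn g (Ioc 0 d)) {x : ℝ}
    (hx : x ∈ Ioc (Real.pi / ξ) d) :
    2 * g x ≤ (1 - Real.cos (ξ * (x - Real.pi / ξ))) * g (x - Real.pi / ξ) +
      (1 - Real.cos (ξ * x)) * g x := by
  have hc : 0 < Real.pi / ξ := by positivity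
  have hmono : g x ≤ g (x - Real.pi / ξ) :=
    hg ⟨sub_pos.2 hx.1, by linarith [hx.2]⟩ ⟨hc.trans hx.1, hx.2⟩ (by linarith)
  have hshift : Real.cos (ξ * (x - Real.pi / ξ)) = -Real.cos (ξ * x) := by
    rw [mul_sub, mul_div_cancel₀ _ hξ.ne', Real.cos_sub_pi]
  have hcos : 0 ≤ 1 + Real.cos (ξ * x) := by linarith [Real.neg_one_le_cos (ξ * x)]
  calc 2 * g x = (1 + Real.cos (ξ * x)) * g x + (1 - Real.cos (ξ * x)) * g x := by ring
    _ ≤ (1 + Real.cos (ξ * x)) * g (x - Real.pi / ξ) + (1 - Real.cos (ξ * x)) * g x := by gcongr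
    _ = _ := by rw [hshift, sub_neg_eq_add]

theorem intervalIntegral_le_integral_one_sub_cos_mul (hξ : 0 < ξ) (hd : Real.pi / ξ ≤ d)
    (hg : AntitoneOn g (Ioc 0 d)) (hg0 : ∀ x ∈ Ioc 0 d, 0 ≤ g x)
    (hint : IntervalIntegrable (fun x => (1 - Real.cos (ξ * x)) * g x) volume 0 d) :
    ∫ x in Real.pi / ξ..d, g x ≤ ∫ x in 0..d, (1 - Real.cos (ξ * x)) * g x := by
  set c := Real.pi / ξ
  set f : ℝ → ℝ := fun x => (1 - Real.cos (ξ * x)) * g x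
  have hc : 0 < c := by positivity
  have hf0 : 0 ≤ᵐ[volume.restrict (Ioc 0 d)] f := by
    filter_upwards [ae_restrict_mem measurableSet_Ioc] with x hx
    exact mul_nonneg (sub_nonneg.2 (Real.cos_le_one _)) (hg0 x hx)
  have hf_left : IntervalIntegrable f volume 0 (d - c) :=
    hint.mono_set (uIcc_subset_uIcc_left (mem_uIcc_of_le (by linarith) (by linarith)))
  have hf_right : IntervalIntegrable f volume c d :=
    hint.mono_set (uIcc_subset_uIcc_right (mem_uIcc_of_le hc.le hd))
  have hf_shift : IntervalIntegrable (fun x => f (x - c)) volume c d := by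
    simpa using hf_left.comp_sub_right c
  have hg_int : IntervalIntegrable g volume c d :=
    (hg.mono (by rw [uIcc_of_le hd]; exact fun x hx => ⟨hc.trans_le hx.1, hx.2⟩)).intervalIntegrable
  suffices 2 * ∫ x in c..d, g x ≤ 2 * ∫ x in 0..d, f x by linarith
  calc 2 * ∫ x in c..d, g x = ∫ x in c..d, 2 * g x :=
        (intervalIntegral.integral_const_mul _ _).symm
    _ ≤ ∫ x in c..d, (f (x - c) + f x) :=
        intervalIntegral.integral_mono_on_of_le_Ioo hd (hg_int.const_mul 2)
          (hf_shift.add hf_right) fun x hx =>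
            two_mul_le_one_sub_cos_mul_add_shift hξ hg (Ioo_subset_Ioc_self hx)
    _ = (∫ x in 0..(d - c), f x) + ∫ x in c..d, f x := by
        rw [intervalIntegral.integral_add hf_shift hf_right,
          intervalIntegral.integral_comp_sub_right, sub_self]
    _ ≤ (∫ x in 0..d, f x) + ∫ x in 0..d, f x := by
        gcongr
        · exact intervalIntegral.integral_mono_interval le_rfl (by linarith) (by linarith) hf0 hint
        · exact intervalIntegral.integral_mono_interval hc.le hd le_rfl hf0 hint
    _ = 2 * ∫ x in 0..d, f x := (two_mul _).symm

end OneSubCos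

section LevyDensity

/-- The density of the Lévy measure on the positive half-line, without the cut-off at `1 / e`. -/
noncomputable def levyDensity (x : ℝ) : ℝ :=
  Real.log (1 / x) / x

theorem levyDensity_nonneg {x : ℝ} (hx0 : 0 < x) (hx1 : x ≤ 1) : 0 ≤ levyDensity x :=
  div_nonneg (Real.log_nonneg ((one_le_div hx0).2 hx1)) hx0.le

theorem antitoneOn_levyDensity : AntitoneOn levyDensity (Ioc 0 1) := by
  intro x hx y hy hxy
  have hx0 : 0 < x := hx.1
  have hy0 : 0 < y := hy.1
  have hlog : 0 ≤ Real.log (1 / x) := Real.log_nonneg ((one_le_div hx0).2 hx.2)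
  unfold levyDensity
  gcongr

theorem measurable_levyDensity : Measurable levyDensity := by
  unfold levyDensity
  fun_prop

theorem integrableOn_abs_rpow_mul_levyDensity {q : ℝ} (hq : 0 < q) :
    IntegrableOn (fun x => |x| ^ q * levyDensity x) (Ioo 0 1) := by
  have hdom : IntegrableOn (fun x : ℝ => x ^ (q / 2 - 1) / (q / 2)) (Ioo 0 1) := by
    rw [← intervalIntegrable_iff_integrableOn_Ioo_of_le zero_le_one]
    exact (intervalIntegral.intervalIntegrable_rpow' (by linarith)).div_const _
  have hmeas : Measurable fun x => |x| ^ q * levyDensity x :=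
    (by fun_prop : Measurable fun x : ℝ => |x| ^ q).mul measurable_levyDensity
  refine hdom.mono' hmeas.aestronglyMeasurable ?_
  filter_upwards [ae_restrict_mem measurableSet_Ioo] with x ⟨hx0, hx1⟩
  have hlog : Real.log (1 / x) ≤ (1 / x) ^ (q / 2) / (q / 2) :=
    Real.log_le_rpow_div (by positivity) (by positivity)
  rw [abs_of_pos hx0, Real.norm_of_nonneg
    (mul_nonneg (by positivity) (levyDensity_nonneg hx0 hx1.le))]
  calc x ^ q * levyDensity x ≤ x ^ q * ((1 / x) ^ (q / 2) / (q / 2) / x) := by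
        unfold levyDensity
        gcongr
    _ = x ^ (q / 2 - 1) / (q / 2) := by
        rw [one_div, Real.inv_rpow hx0.le, Real.rpow_sub_one hx0.ne', ← add_halves q,
          Real.rpow_add hx0, add_halves]
        field_simp

theorem integral_levyDensity {c d : ℝ} (hc : 0 < c) (hd : 0 < d) :
    ∫ x in c..d, levyDensity x = (Real.log c ^ 2 - Real.log d ^ 2) / 2 := by
  have hne : ∀ x ∈ uIcc c d, x ≠ 0 := fun x hx => ((lt_min hc hd).trans_le hx.1).ne'
  have hcont : ContinuousOn levyDensity (uIcc c d) := by
    unfold levyDensity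
    fun_prop (disch := simp_all)
  have hderiv : ∀ x ∈ uIcc c d, HasDerivAt (fun x => -(Real.log x ^ 2 / 2)) (levyDensity x) x := by
    intro x hx
    refine (((Real.hasDerivAt_log (hne x hx)).pow 2).div_const 2).neg.congr_deriv ?_
    rw [levyDensity, one_div, Real.log_inv]
    push_cast
    ring
  rw [intervalIntegral.integral_eq_sub_of_hasDerivAt hderiv hcont.intervalIntegrable]
  ring

end LevyDensity

section PsiEx

theorem psiEx_eq (ξ : ℝ) :
    psiEx ξ = 2 * ∫ x in Ioo 0 (Real.exp 1)⁻¹, (1 - Real.cos (ξ * x)) * levyDensity x := by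
  simp only [psiEx, levyDensity, mul_div_assoc]

theorem inv_exp_one_le_one : (Real.exp 1)⁻¹ ≤ 1 :=
  inv_le_one_of_one_le₀ (Real.one_le_exp zero_le_one)

theorem psiEx_nonneg (ξ : ℝ) : 0 ≤ psiEx ξ := by
  rw [psiEx_eq]
  exact mul_nonneg zero_le_two <| setIntegral_nonneg measurableSet_Ioo fun x hx =>
    mul_nonneg (sub_nonneg.2 (Real.cos_le_one _))
      (levyDensity_nonneg hx.1 (hx.2.le.trans inv_exp_one_le_one))

theorem psiEx_neg (ξ : ℝ) : psiEx (-ξ) = psiEx ξ := by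
  simp [psiEx]

theorem measurable_psiEx : Measurable psiEx := by
  unfold psiEx
  have : StronglyMeasurable fun p : ℝ × ℝ =>
      (1 - Real.cos (p.1 * p.2)) * Real.log (1 / p.2) / p.2 :=
    Measurable.stronglyMeasurable (by fun_prop)
  exact this.integral_prod_right.measurable.const_mul 2

theorem log_div_pi_sq_le_one_add_psiEx {ξ : ℝ} (hξ : Real.pi * Real.exp 1 ≤ ξ) :
    Real.log (ξ / Real.pi) ^ 2 ≤ 1 + psiEx ξ := by
  have hξ0 : 0 < ξ := lt_of_lt_of_le (by positivity) hξ
  have hcut : Real.pi / ξ ≤ (Real.exp 1)⁻¹ := by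
    rwa [div_le_iff₀ hξ0, inv_mul_eq_div, le_div_iff₀ (Real.exp_pos 1)]
  have hsub : Ioc 0 (Real.exp 1)⁻¹ ⊆ Ioc 0 1 := Ioc_subset_Ioc_right inv_exp_one_le_one
  have hint : IntervalIntegrable (fun x => (1 - Real.cos (ξ * x)) * levyDensity x) volume
      0 (Real.exp 1)⁻¹ := by
    rw [intervalIntegrable_iff_integrableOn_Ioo_of_le (by positivity)]
    exact integrable_one_sub_cos_mul zero_le_one one_le_two
      ((integrableOn_abs_rpow_mul_levyDensity one_pos).mono_set
        (Ioo_subset_Ioo_right inv_exp_one_le_one)) ξ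
  have hle := intervalIntegral_le_integral_one_sub_cos_mul hξ0 hcut
    (antitoneOn_levyDensity.mono hsub) (fun x hx => levyDensity_nonneg hx.1 (hsub hx).2) hint
  rw [integral_levyDensity (by positivity) (by positivity), Real.log_inv, Real.log_exp,
    ← inv_div ξ, Real.log_inv, intervalIntegral.integral_of_le (by positivity),
    integral_Ioc_eq_integral_Ioo] at hle
  rw [psiEx_eq]
  linarith

theorem isBigO_log_sq_one_add_psiEx :
    (fun ξ => Real.log ξ ^ 2) =O[atTop] fun ξ => 1 + psiEx ξ := by
  have hshift : (fun ξ => Real.log ξ) =O[atTop] fun ξ => Real.log (ξ / Real.pi) :=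
    ((Real.isBigO_log_const_mul_log_atTop Real.pi).comp_tendsto
      (tendsto_id.atTop_div_const Real.pi_pos)).congr_left fun ξ => by
        simp [mul_div_cancel₀ _ Real.pi_ne_zero]
  refine (hshift.pow 2).trans (.of_norm_eventuallyLE ?_)
  filter_upwards [eventually_ge_atTop (Real.pi * Real.exp 1)] with ξ hξ
  rw [Real.norm_of_nonneg (sq_nonneg _)]
  exact log_div_pi_sq_le_one_add_psiEx hξ

theorem isBigO_psiEx_rpow_of_le_two {q : ℝ} (hq0 : 0 < q) (hq2 : q ≤ 2) :
    psiEx =O[atTop] fun ξ => ξ ^ q := by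
  have hg := (integrableOn_abs_rpow_mul_levyDensity hq0).mono_set
    (Ioo_subset_Ioo_right inv_exp_one_le_one)
  have hbound := norm_integral_one_sub_cos_mul_le hq0.le hq2 hg
  refine .of_bound (4 * ∫ x in Ioo 0 (Real.exp 1)⁻¹, ‖|x| ^ q * levyDensity x‖) ?_
  filter_upwards [eventually_ge_atTop 0] with ξ hξ
  rw [psiEx_eq, norm_mul, Real.norm_ofNat, Real.norm_of_nonneg (Real.rpow_nonneg hξ q)]
  have hξ_bound := hbound ξ
  rw [abs_of_nonneg hξ] at hξ_bound
  linarith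

theorem isBigO_one_add_psiEx_rpow {q : ℝ} (hq : 0 < q) :
    (fun ξ => 1 + psiEx ξ) =O[atTop] fun ξ => ξ ^ q := by
  have hone : (fun _ : ℝ => (1 : ℝ)) =O[atTop] fun ξ => ξ ^ q :=
    (isLittleO_const_left.2 (.inr (tendsto_norm_atTop_atTop.comp (tendsto_rpow_atTop hq)))).isBigO
  have hpow : (fun ξ : ℝ => ξ ^ min q 2) =O[atTop] fun ξ => ξ ^ q := by
    refine .of_norm_eventuallyLE ?_
    filter_upwards [eventually_ge_atTop 1] with ξ hξ
    rw [Real.norm_of_nonneg (by positivity)]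
    exact Real.rpow_le_rpow_of_exponent_le hξ (min_le_left q 2)
  exact hone.add ((isBigO_psiEx_rpow_of_le_two (lt_min hq two_pos) (min_le_right q 2)).trans hpow)

end PsiEx

section SpectralMeasure

theorem isBigO_rpow_neg_of_isBigO {α : Type*} {l : Filter α} {f h : α → ℝ} {s : ℝ}
    (hfh : f =O[l] h) (hf : ∀ᶠ x in l, 0 < f x) (hs : 0 ≤ s) :
    (fun x => h x ^ (-s)) =O[l] fun x => f x ^ (-s) := by
  have hinv : (fun x => (h x)⁻¹) =O[l] fun x => (f x)⁻¹ :=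
    hfh.inv_rev (hf.mono fun x hx h0 => absurd h0 hx.ne')
  simpa only [Real.rpow_neg_eq_inv_rpow] using
    hinv.rpow hs (hf.mono fun x hx => inv_nonneg.2 hx.le)

variable {h : ℝ → ℝ}

theorem integrable_muEx_iff {f : ℝ → ℝ} :
    Integrable f muEx ↔ Integrable fun ξ => f ξ / (1 + |ξ|) := by
  have hdens : ∀ ξ : ℝ, (ENNReal.ofReal (1 / (1 + |ξ|))).toReal = 1 / (1 + |ξ|) := fun ξ =>
    ENNReal.toReal_ofReal (by positivity)
  rw [muEx, integrable_withDensity_iff (by fun_prop) (by simp)]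
  simp only [hdens, mul_one_div]

theorem integrableAtFilter_log_rpow_div_atTop {r : ℝ} (hr : r < -1) :
    IntegrableAtFilter (fun ξ => Real.log ξ ^ r / ξ) atTop := by
  refine ⟨Ioi (Real.exp 1), Ioi_mem_atTop _, ?_⟩
  have := (integrableOn_comp_log_Ioi (fun y => y ^ r) (Real.exp_pos 1)).2
    (by simpa using integrableOn_Ioi_rpow_of_lt hr one_pos)
  simpa only [smul_eq_mul, inv_mul_eq_div] using this

theorem isTheta_inv_one_add_abs :
    (fun ξ : ℝ => (1 + |ξ|)⁻¹) =Θ[atTop] fun ξ => ξ⁻¹ := by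
  have hid : (fun ξ : ℝ => 1 + ξ) =Θ[atTop] fun ξ => ξ :=
    (isLittleO_const_id_atTop (1 : ℝ)).right_isTheta_add.symm
  refine (EventuallyEq.trans_isTheta ?_ hid).inv
  filter_upwards [eventually_ge_atTop 0] with ξ hξ
  rw [abs_of_nonneg hξ]

theorem integrable_rpow_neg_muEx {p s : ℝ} (hh : Measurable h) (hone : ∀ ξ, 1 ≤ h ξ)
    (heven : ∀ ξ, h (-ξ) = h ξ) (hlog : (fun ξ => Real.log ξ ^ p) =O[atTop] h)
    (hs : 0 ≤ s) (hps : 1 < p * s) :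
    Integrable (fun ξ => h ξ ^ (-s)) muEx := by
  have hloc : LocallyIntegrable fun ξ => h ξ ^ (-s) / (1 + |ξ|) := by
    have hmeas : Measurable fun ξ => h ξ ^ (-s) / (1 + |ξ|) := by fun_prop
    refine (locallyIntegrable_const (1 : ℝ)).mono hmeas.aestronglyMeasurable
      (.of_forall fun ξ => ?_)
    have hpow0 : 0 ≤ h ξ ^ (-s) := Real.rpow_nonneg (zero_le_one.trans (hone ξ)) _
    have hpow1 : h ξ ^ (-s) ≤ 1 := Real.rpow_le_one_of_one_le_of_nonpos (hone ξ) (neg_nonpos.2 hs)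
    rw [norm_one, Real.norm_of_nonneg (by positivity)]
    exact div_le_one_of_le₀ (by linarith [abs_nonneg ξ]) (by positivity)
  have hlog0 : ∀ᶠ ξ in atTop, 0 < Real.log ξ :=
    Real.tendsto_log_atTop.eventually (eventually_gt_atTop 0)
  have hpow : (fun ξ => h ξ ^ (-s)) =O[atTop] fun ξ => Real.log ξ ^ (-(p * s)) := by
    refine (isBigO_rpow_neg_of_isBigO hlog (hlog0.mono fun ξ hξ => Real.rpow_pos_of_pos hξ p)
      hs).trans_eventuallyEq ?_
    filter_upwards [hlog0] with ξ hξ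
    rw [← Real.rpow_mul hξ.le, mul_neg]
  have htail : (fun ξ => h ξ ^ (-s) / (1 + |ξ|)) =O[atTop]
      fun ξ => Real.log ξ ^ (-(p * s)) / ξ := by
    simpa only [div_eq_mul_inv] using hpow.mul isTheta_inv_one_add_abs.isBigO
  exact integrable_muEx_iff.2 <| hloc.integrable_of_isBigO_atTop_of_norm_isNegInvariant
    (.of_forall fun ξ => by simp [heven]) htail
    (integrableAtFilter_log_rpow_div_atTop (by linarith))

theorem not_integrable_abs_rpow_div_muEx {q : ℝ} (hne : ∀ᶠ ξ in atTop, h ξ ≠ 0)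
    (hgrowth : h =O[atTop] fun ξ => ξ ^ q) :
    ¬ Integrable (fun ξ => |ξ| ^ q / h ξ) muEx := by
  have hone : (fun _ : ℝ => (1 : ℝ)) =O[atTop] fun ξ => |ξ| ^ q / h ξ := by
    have hinv := hgrowth.inv_rev (hne.mono fun ξ hξ h0 => absurd h0 hξ)
    refine ((isBigO_refl (fun ξ : ℝ => ξ ^ q) atTop).mul hinv).congr' ?_ ?_ <;>
      filter_upwards [eventually_gt_atTop 0] with ξ hξ
    · exact mul_inv_cancel₀ (Real.rpow_pos_of_pos hξ q).ne'
    · rw [abs_of_pos hξ, div_eq_mul_inv]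
  have htail : (fun ξ : ℝ => ξ ^ (-1 : ℝ)) =O[atTop] fun ξ => |ξ| ^ q / h ξ / (1 + |ξ|) := by
    simpa only [one_mul, div_mul_eq_div_div, ← div_eq_mul_inv, one_div, Real.rpow_neg_one] using
      hone.mul isTheta_inv_one_add_abs.isBigO_symm
  have hmeas : Measurable fun ξ : ℝ => ξ ^ (-1 : ℝ) := by fun_prop
  intro hint
  have hharmonic : IntegrableAtFilter (fun ξ : ℝ => ξ ^ (-1 : ℝ)) atTop :=
    htail.integrableAtFilter hmeas.stronglyMeasurable.stronglyMeasurableAtFilter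
      ((integrable_muEx_iff.1 hint).integrableAtFilter _)
  exact (integrableAtFilter_rpow_atTop_iff.1 hharmonic).false

end SpectralMeasure

theorem lintegral_psiEx_rpow_div_lt_top {a : ℝ} (ha0 : 0 ≤ a) (ha : a < 1 / 2) :
    ∫⁻ ξ, ENNReal.ofReal (psiEx ξ ^ a / (1 + psiEx ξ)) ∂muEx < ⊤ := by
  have hint : Integrable (fun ξ => (1 + psiEx ξ) ^ (-(1 - a))) muEx :=
    integrable_rpow_neg_muEx (p := 2) (measurable_psiEx.const_add 1)
      (fun ξ => le_add_of_nonneg_right (psiEx_nonneg ξ)) (fun ξ => by rw [psiEx_neg])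
      (mod_cast isBigO_log_sq_one_add_psiEx) (by linarith) (by linarith)
  refine (lintegral_mono fun ξ => ENNReal.ofReal_le_ofReal ?_).trans_lt hint.lintegral_lt_top
  have hψ := psiEx_nonneg ξ
  rw [neg_sub, Real.rpow_sub_one (by positivity)]
  gcongr
  exact le_add_of_nonneg_left zero_le_one

theorem lintegral_abs_rpow_div_eq_top {b : ℝ} (hb : 0 < b) :
    ∫⁻ ξ, ENNReal.ofReal (|ξ| ^ (2 * b) / (1 + psiEx ξ)) ∂muEx = ⊤ := by
  have hpos : ∀ ξ, 0 < 1 + psiEx ξ := fun ξ => add_pos_of_pos_of_nonneg one_pos (psiEx_nonneg ξ)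
  have hmeas : Measurable fun ξ => |ξ| ^ (2 * b) / (1 + psiEx ξ) :=
    (by fun_prop : Measurable fun ξ : ℝ => |ξ| ^ (2 * b)).div (measurable_psiEx.const_add 1)
  by_contra hne
  refine not_integrable_abs_rpow_div_muEx (.of_forall fun ξ => (hpos ξ).ne')
    (isBigO_one_add_psiEx_rpow (by positivity : 0 < 2 * b)) ?_
  exact (lintegral_ofReal_ne_top_iff_integrable hmeas.aestronglyMeasurable
    (.of_forall fun ξ => div_nonneg (by positivity) (hpos ξ).le)).1 hne

/-- Example with `ind_H = 1` and `ind_L = 0` (Proposition 2.1): Dalang's condition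
holds, `∫ ψ^a (1+ψ)⁻¹ dμ < ∞` for every `a ∈ (0,1/2)`, and
`∫ |ξ|^{2b} (1+ψ)⁻¹ dμ = ∞` for every `b > 0`. -/
theorem stmt_19 :
    (∫⁻ ξ, ENNReal.ofReal (1 / (1 + psiEx ξ)) ∂muEx) < ⊤ ∧
    (∀ a ∈ Ioo (0 : ℝ) (1 / 2),
      (∫⁻ ξ, ENNReal.ofReal (psiEx ξ ^ a / (1 + psiEx ξ)) ∂muEx) < ⊤) ∧
    (∀ b : ℝ, 0 < b →
      (∫⁻ ξ, ENNReal.ofReal (|ξ| ^ (2 * b) / (1 + psiEx ξ)) ∂muEx) = ⊤) ∧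
    ∃ a ∈ Ioo (0 : ℝ) 1,
      (∫⁻ ξ, ENNReal.ofReal (psiEx ξ ^ a / (1 + psiEx ξ)) ∂muEx) < ⊤ ∧
        ∀ b ∈ Ioo (0 : ℝ) 1,
          (∫⁻ ξ, ENNReal.ofReal (|ξ| ^ (2 * b) / (1 + psiEx ξ)) ∂muEx) = ⊤ := by
  refine ⟨?dalang, fun a ha => lintegral_psiEx_rpow_div_lt_top ha.1.le ha.2,
    fun b hb => lintegral_abs_rpow_div_eq_top hb, 1 / 4, by norm_num,
    lintegral_psiEx_rpow_div_lt_top (by norm_num) (by norm_num),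
    fun b hb => lintegral_abs_rpow_div_eq_top hb.1⟩
  case dalang =>
    simpa only [Real.rpow_zero] using lintegral_psiEx_rpow_div_lt_top le_rfl one_half_pos
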